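/- Let n ≥ 1 and let ψ ∈ ℂ^(2^n) be any unit vector. If 0 ≤ ε < 1/(1 + 2^(2n−1)), then the pseudo-pure state ρ = ε ψψ* + (1−ε) 2^{−n} I is separable as an n-qubit state, regardless of ψ. -/

import Mathlib

open Matrix
open scoped ComplexOrder

/-- A density matrix: positive semidefinite with trace 1. -/
def IsDensityMatrix {m : Type} [Fintype m] [DecidableEq m] (ρ : Matrix m m ℂ) : Prop :=
  ρ.PosSemidef ∧ ρ.trace = 1

/-- An `n`-qubit product state: a tensor (Kronecker) product `ρ₁ ⊗ ⋯ ⊗ ρₙ` of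
single-qubit density matrices, expressed entrywise on the index type `Fin n → Fin 2`. -/
def IsProductState (n : ℕ) (ρ : Matrix (Fin n → Fin 2) (Fin n → Fin 2) ℂ) : Prop :=
  ∃ σ : Fin n → Matrix (Fin 2) (Fin 2) ℂ,
    (∀ i, IsDensityMatrix (σ i)) ∧ ∀ x y, ρ x y = ∏ i, σ i (x i) (y i)

/-- An `n`-qubit state is separable if it is a finite convex combination of product states. -/
def IsSeparableState (n : ℕ) (ρ : Matrix (Fin n → Fin 2) (Fin n → Fin 2) ℂ) : Prop :=
  ∃ (k : ℕ) (p : Fin k → ℝ) (σ : Fin k → Matrix (Fin n → Fin 2) (Fin n → Fin 2) ℂ),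
    (∀ j, 0 ≤ p j) ∧ (∑ j, p j = 1) ∧ (∀ j, IsProductState n (σ j)) ∧
      ρ = ∑ j, (p j : ℂ) • σ j

namespace PPS

/-- tensor product of one-qubit matrices -/
noncomputable def tens {n : ℕ} (M : Fin n → Matrix (Fin 2) (Fin 2) ℂ) :
    Matrix (Fin n → Fin 2) (Fin n → Fin 2) ℂ := fun x y => ∏ i, M i (x i) (y i)

theorem sum_prod {n : ℕ} {κ : Type} [Fintype κ] [DecidableEq κ] (f : Fin n → κ → ℂ) :
    ∑ J : Fin n → κ, ∏ i, f i (J i) = ∏ i, ∑ j, f i j := by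
  rw [Finset.prod_univ_sum, Fintype.piFinset_univ]

theorem tens_mul {n : ℕ} (M N : Fin n → Matrix (Fin 2) (Fin 2) ℂ) :
    tens M * tens N = tens (fun i => M i * N i) := by
  ext x y
  simp only [tens, Matrix.mul_apply, ← Finset.prod_mul_distrib]
  exact sum_prod (fun i j => M i (x i) j * N i j (y i))

theorem tens_conj {n : ℕ} (M : Fin n → Matrix (Fin 2) (Fin 2) ℂ) :
    (tens M)ᴴ = tens (fun i => (M i)ᴴ) := by
  ext x y
  simp [tens, Matrix.conjTranspose_apply]

theorem tens_posSemidef {n : ℕ} (M : Fin n → Matrix (Fin 2) (Fin 2) ℂ)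
    (h1 : ∀ i, (M i)ᴴ = M i) (h2 : ∀ i, M i * M i = M i) : (tens M).PosSemidef := by
  have : tens M = (tens M)ᴴ * tens M := by
    rw [tens_conj, tens_mul]; simp [h1, h2]
  rw [this]
  exact Matrix.posSemidef_conjTranspose_mul_self _

theorem prod_apply_one {n : ℕ} (x y : Fin n → Fin 2) :
    ∏ i, (if x i = y i then (1:ℂ) else 0) = if x = y then 1 else 0 := by
  split_ifs with h
  · simp [h]
  · obtain ⟨i, hi⟩ := Function.ne_iff.mp h
    exact Finset.prod_eq_zero (Finset.mem_univ i) (by simp [hi])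

theorem tens_one {n : ℕ} : tens (fun _ : Fin n => (1 : Matrix (Fin 2) (Fin 2) ℂ)) = 1 := by
  ext x y
  simp only [tens, Matrix.one_apply, prod_apply_one]

/-- expansion -/
theorem tens_expand {n : ℕ} (c : Fin 2 → ℂ) (M : Fin n → Fin 2 → Matrix (Fin 2) (Fin 2) ℂ) :
    tens (fun i => ∑ s, c s • M i s) =
      ∑ S : Fin n → Fin 2, (∏ i, c (S i)) • tens (fun i => M i (S i)) := by
  ext x y
  simp only [tens, Matrix.sum_apply, Matrix.smul_apply, smul_eq_mul, ← Finset.prod_mul_distrib]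
  exact (sum_prod (fun i s => c s * M i s (x i) (y i))).symm

noncomputable def cc : Fin 2 → ℝ := ![4, -2]

theorem coeff {n : ℕ} (hn : 1 ≤ n) (S : Fin n → Fin 2) :
    0 ≤ (∏ i, cc (S i)) + 2 ^ (2 * n - 1) := by
  by_cases h : ∀ i, S i = 0
  · have : 0 ≤ ∏ i, cc (S i) := Finset.prod_nonneg (fun i _ => by simp [h, cc])
    positivity
  · push Not at h
    obtain ⟨i, hi⟩ := h
    have hi1 : S i = 1 := by omega
    have h1 : |∏ i, cc (S i)| ≤ 2 ^ (2 * n - 1) := by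
      rw [← Finset.mul_prod_erase _ _ (Finset.mem_univ i), abs_mul, Finset.abs_prod]
      have h2 : ∏ x ∈ Finset.univ.erase i, |cc (S x)| ≤ ∏ x ∈ Finset.univ.erase i, (4:ℝ) := by
        apply Finset.prod_le_prod
        · intros; positivity
        · intro x _
          generalize S x = s
          fin_cases s <;> norm_num [cc]
      rw [Finset.prod_const, Finset.card_erase_of_mem (Finset.mem_univ i), Finset.card_univ,
        Fintype.card_fin] at h2
      have h3 : (2:ℝ) ^ (2 * n - 1) = 2 * 4 ^ (n - 1) := by
        obtain ⟨m, rfl⟩ := Nat.exists_eq_add_of_le hn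
        rw [show 2 * (1 + m) - 1 = 2 * m + 1 by omega, pow_succ, pow_mul]
        norm_num [mul_comm]
      have h4 : |cc (S i)| = 2 := by rw [hi1]; norm_num [cc]
      rw [h3, h4]
      linarith
    linarith [neg_abs_le (∏ i, cc (S i))]

theorem tensQ {n : ℕ} (hn : 1 ≤ n) (P : Fin n → Matrix (Fin 2) (Fin 2) ℂ)
    (h1 : ∀ i, (P i)ᴴ = P i) (h2 : ∀ i, P i * P i = P i) :
    (tens (fun i => (6:ℂ) • P i - (2:ℂ) • 1) + (2:ℂ) ^ (2 * n - 1) • 1).PosSemidef := by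
  let M : Fin n → Fin 2 → Matrix (Fin 2) (Fin 2) ℂ := fun i => ![P i, 1 - P i]
  have e1 : (fun i => (6:ℂ) • P i - (2:ℂ) • 1) = fun i => ∑ s, ((cc s : ℝ) : ℂ) • M i s := by
    funext i
    simp [M, cc, Fin.sum_univ_two]
    module
  have e2 : (1 : Matrix (Fin n → Fin 2) (Fin n → Fin 2) ℂ) =
      ∑ S : Fin n → Fin 2, tens (fun i => M i (S i)) := by
    have := tens_expand (fun _ => 1) M
    simp only [one_smul, Finset.prod_const_one] at this
    rw [← this, ← tens_one]
    congr 1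
    funext i
    simp [M, Fin.sum_univ_two]
  rw [e1, tens_expand, e2, Finset.smul_sum, ← Finset.sum_add_distrib]
  apply Matrix.posSemidef_sum
  intro S _
  rw [← add_smul]
  apply Matrix.PosSemidef.smul
  · apply tens_posSemidef
    · intro i
      generalize S i = s
      fin_cases s <;> simp [M, h1]
    · intro i
      generalize S i = s
      fin_cases s <;> simp [M, h2, mul_sub, sub_mul]
  · have := coeff hn S
    have h : (0:ℂ) ≤ (((∏ i, cc (S i)) + 2 ^ (2 * n - 1) : ℝ) : ℂ) := by exact_mod_cast this
    simpa using h

noncomputable def oct : Fin 6 → Matrix (Fin 2) (Fin 2) ℂ :=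
  ![!![1,0;0,0], !![0,0;0,1], !![1/2,1/2;1/2,1/2], !![1/2,-1/2;-1/2,1/2],
    !![1/2,-Complex.I/2;Complex.I/2,1/2], !![1/2,Complex.I/2;-Complex.I/2,1/2]]

theorem oct_conj (j : Fin 6) : (oct j)ᴴ = oct j := by
  ext x y
  fin_cases j <;> fin_cases x <;> fin_cases y <;> simp [oct, Matrix.conjTranspose_apply]

theorem oct_sq (j : Fin 6) : oct j * oct j = oct j := by
  ext x y
  fin_cases j <;> fin_cases x <;> fin_cases y <;>
    simp [oct, Matrix.mul_apply, Fin.sum_univ_two] <;> ring_nf <;> simp <;> norm_num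

theorem oct_dens (j : Fin 6) : IsDensityMatrix (oct j) := by
  constructor
  · have : oct j = (oct j)ᴴ * oct j := by rw [oct_conj, oct_sq]
    rw [this]
    exact Matrix.posSemidef_conjTranspose_mul_self _
  · fin_cases j <;> simp [oct, Matrix.trace, Fin.sum_univ_two] <;> norm_num

noncomputable def Q (j : Fin 6) : Matrix (Fin 2) (Fin 2) ℂ := (6:ℂ) • oct j - (2:ℂ) • 1

theorem oct_rec (a b x y : Fin 2) : ∑ j, Q j b a * oct j x y =
    6 * ((if x = a then 1 else 0) * (if y = b then 1 else 0)) := by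
  fin_cases a <;> fin_cases b <;> fin_cases x <;> fin_cases y <;>
    simp [Q, oct, Fin.sum_univ_six] <;> ring_nf <;> simp <;> norm_num

theorem oct_sum (x y : Fin 2) : ∑ j, oct j x y = 3 * (if x = y then 1 else 0) := by
  fin_cases x <;> fin_cases y <;>
    simp [oct, Fin.sum_univ_six] <;> ring_nf

theorem Q_sum (x y : Fin 2) : ∑ j, Q j x y = 6 * (if x = y then 1 else 0) := by
  fin_cases x <;> fin_cases y <;>
    simp [Q, oct, Fin.sum_univ_six] <;> ring_nf

theorem sep_of_fintype (n : ℕ) {κ : Type} [Fintype κ] (p : κ → ℝ)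
    (σ : κ → Matrix (Fin n → Fin 2) (Fin n → Fin 2) ℂ)
    (h0 : ∀ j, 0 ≤ p j) (h1 : ∑ j, p j = 1) (h2 : ∀ j, IsProductState n (σ j))
    (ρ : Matrix (Fin n → Fin 2) (Fin n → Fin 2) ℂ) (h : ρ = ∑ j, (p j : ℂ) • σ j) :
    IsSeparableState n ρ := by
  let e := (Fintype.equivFin κ).symm
  refine ⟨Fintype.card κ, p ∘ e, σ ∘ e, fun j => h0 _, ?_, fun j => h2 _, ?_⟩
  · rw [← h1]; exact e.sum_comp p
  · rw [h]; exact (e.sum_comp (fun j => (p j : ℂ) • σ j)).symm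

/-- quasi-probability weight -/
noncomputable def w {n : ℕ} (ψ : (Fin n → Fin 2) → ℂ) (J : Fin n → Fin 6) : ℂ :=
  ∑ b, ∑ a, star (ψ b) * ψ a * tens (fun i => Q (J i)) b a

theorem w_bound {n : ℕ} (hn : 1 ≤ n) (ψ : (Fin n → Fin 2) → ℂ)
    (hψ : ∑ x, star (ψ x) * ψ x = 1) (J : Fin n → Fin 6) :
    0 ≤ w ψ J + (2:ℂ) ^ (2 * n - 1) := by
  have h := (tensQ hn (fun i => oct (J i)) (fun i => oct_conj _)
    (fun i => oct_sq _)).dotProduct_mulVec_nonneg ψ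
  convert h using 1
  rw [Matrix.add_mulVec, dotProduct_add, Matrix.smul_mulVec, Matrix.one_mulVec, dotProduct_smul]
  congr 1
  · simp only [w, dotProduct, mulVec, Finset.mul_sum, Pi.star_apply]
    refine Finset.sum_congr rfl fun b _ => Finset.sum_congr rfl fun a _ => ?_
    simp only [Q]
    ring
  · simp only [dotProduct, Pi.star_apply, hψ, smul_eq_mul, mul_one]

theorem w_sum {n : ℕ} (ψ : (Fin n → Fin 2) → ℂ)
    (hψ : ∑ x, star (ψ x) * ψ x = 1) : ∑ J, w ψ J = 6 ^ n := by
  have key : ∀ b a : Fin n → Fin 2, ∑ J : Fin n → Fin 6, tens (fun i => Q (J i)) b a =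
      6 ^ n * if b = a then 1 else 0 := by
    intro b a
    simp only [tens]
    rw [sum_prod (fun i j => Q j (b i) (a i))]
    simp only [Q_sum, Finset.prod_mul_distrib, prod_apply_one]
    simp
  simp only [w]
  rw [Finset.sum_comm]
  have : ∀ b : Fin n → Fin 2, ∑ J : Fin n → Fin 6, ∑ a,
      star (ψ b) * ψ a * tens (fun i => Q (J i)) b a = 6 ^ n * (star (ψ b) * ψ b) := by
    intro b
    rw [Finset.sum_comm]
    simp only [← Finset.mul_sum, key]
    simp [mul_comm]
  simp only [this, ← Finset.mul_sum, hψ, mul_one]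

theorem w_rec {n : ℕ} (ψ : (Fin n → Fin 2) → ℂ) (x y : Fin n → Fin 2) :
    ∑ J, w ψ J * tens (fun i => oct (J i)) x y = 6 ^ n * (ψ x * star (ψ y)) := by
  have key : ∀ b a : Fin n → Fin 2, ∑ J : Fin n → Fin 6,
      tens (fun i => Q (J i)) b a * tens (fun i => oct (J i)) x y =
      6 ^ n * ((if x = a then 1 else 0) * if y = b then 1 else 0) := by
    intro b a
    simp only [tens, ← Finset.prod_mul_distrib]
    rw [sum_prod (fun i j => Q j (b i) (a i) * oct j (x i) (y i))]
    simp only [oct_rec, Finset.prod_mul_distrib, prod_apply_one]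
    simp
  simp only [w, Finset.sum_mul]
  rw [Finset.sum_comm]
  have : ∀ b : Fin n → Fin 2, ∑ J : Fin n → Fin 6, ∑ a,
      star (ψ b) * ψ a * tens (fun i => Q (J i)) b a * tens (fun i => oct (J i)) x y =
      6 ^ n * (star (ψ b) * ψ x * if y = b then 1 else 0) := by
    intro b
    rw [Finset.sum_comm]
    simp only [mul_assoc, ← Finset.mul_sum, key]
    simp
    split_ifs <;> ring
  simp only [this, ← Finset.mul_sum]
  simp [mul_comm]

theorem oct_tens_sum {n : ℕ} (x y : Fin n → Fin 2) :
    ∑ J : Fin n → Fin 6, tens (fun i => oct (J i)) x y = 3 ^ n * if x = y then 1 else 0 := by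
  simp only [tens]
  rw [sum_prod (fun i j => oct j (x i) (y i))]
  simp only [oct_sum, Finset.prod_mul_distrib, prod_apply_one]
  simp

end PPS

/-- Braunstein et al.: for any unit vector `ψ` on `n` qubits, the pseudo-pure state
`ε ψψ* + (1-ε) 2^{-n} I` is separable whenever `0 ≤ ε < 1/(1 + 2^(2n-1))`. -/
theorem pps_separable (n : ℕ) (hn : 1 ≤ n) (ψ : (Fin n → Fin 2) → ℂ)
    (hψ : ∑ x, ‖ψ x‖ ^ 2 = 1) (ε : ℝ) (hε0 : 0 ≤ ε)
    (hε : ε < 1 / (1 + 2 ^ (2 * n - 1))) :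
    IsSeparableState n
      ((ε : ℂ) • vecMulVec ψ (star ψ) + (((1 - ε) / 2 ^ n : ℝ) : ℂ) • 1) := by
  have hψ' : ∑ x, star (ψ x) * ψ x = 1 := by
    have : ∀ x, star (ψ x) * ψ x = ((‖ψ x‖ ^ 2 : ℝ) : ℂ) := by
      intro x
      rw [Complex.star_def, Complex.conj_mul']
      push_cast; rfl
    simp only [this]
    rw [← Complex.ofReal_sum, hψ, Complex.ofReal_one]
  have hb : ∀ J, PPS.w ψ J = ((PPS.w ψ J).re : ℂ) ∧ 0 ≤ (PPS.w ψ J).re + 2 ^ (2 * n - 1) := by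
    intro J
    have h := PPS.w_bound hn ψ hψ' J
    rw [show (2:ℂ) ^ (2 * n - 1) = (((2:ℝ) ^ (2 * n - 1) : ℝ) : ℂ) by push_cast; rfl,
      Complex.le_def] at h
    simp only [Complex.add_re, Complex.add_im, Complex.ofReal_re, Complex.ofReal_im,
      Complex.zero_re, Complex.zero_im, add_zero] at h
    refine ⟨?_, h.1⟩
    apply Complex.ext <;> simp [← h.2]
  let p : (Fin n → Fin 6) → ℝ := fun J => (ε * (PPS.w ψ J).re + (1 - ε)) / 6 ^ n
  have hp : ∀ J, (p J : ℂ) = (ε * PPS.w ψ J + (1 - ε)) / 6 ^ n := by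
    intro J
    rw [(hb J).1]
    simp [p]
  refine PPS.sep_of_fintype n p (fun J => PPS.tens (fun i => PPS.oct (J i))) ?_ ?_ ?_ _ ?_
  · intro J
    apply div_nonneg _ (by positivity)
    have h2 : (0:ℝ) < 1 + 2 ^ (2 * n - 1) := by positivity
    rw [lt_div_iff₀ h2] at hε
    nlinarith [mul_nonneg hε0 (hb J).2]
  · have : ((∑ J, p J : ℝ) : ℂ) = 1 := by
      rw [Complex.ofReal_sum]
      simp only [hp]
      rw [← Finset.sum_div, Finset.sum_add_distrib, ← Finset.mul_sum, PPS.w_sum ψ hψ']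
      simp
      field_simp
      ring
    exact_mod_cast this
  · intro J
    exact ⟨fun i => PPS.oct (J i), fun i => PPS.oct_dens _, fun x y => rfl⟩
  · ext x y
    simp only [Matrix.add_apply, Matrix.smul_apply, Matrix.sum_apply, smul_eq_mul, hp,
      vecMulVec_apply, Pi.star_apply, Matrix.one_apply]
    have : ∀ J : Fin n → Fin 6, (ε * PPS.w ψ J + (1 - ε)) / 6 ^ n *
        PPS.tens (fun i => PPS.oct (J i)) x y =
        ε / 6 ^ n * (PPS.w ψ J * PPS.tens (fun i => PPS.oct (J i)) x y) +
        (1 - ε) / 6 ^ n * PPS.tens (fun i => PPS.oct (J i)) x y := by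
      intro J; ring
    simp only [this]
    rw [Finset.sum_add_distrib, ← Finset.mul_sum, ← Finset.mul_sum, PPS.w_rec, PPS.oct_tens_sum]
    have h6 : (6:ℂ) ^ n = 2 ^ n * 3 ^ n := by rw [← mul_pow]; norm_num
    rw [h6]
    push_cast
    field_simp
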